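/- Let k be a field, G a group, n ≥ 1, and ρ : G →* GL(n,k) a representation of G on V = kⁿ. Let v ∈ V be fixed by every element of G, and suppose there exists a G-invariant homogeneous polynomial of positive degree not vanishing at v. Let d be the least positive degree of such a polynomial. Then either d = 1, or the characteristic of k is a prime p > 0 and p divides d. In particular, if char k = 0 then d = 1. -/

import Mathlib

open MvPolynomial

/-- The action of a matrix `M` on polynomial functions on `kⁿ`: the `k`-algebra substitution
sending the coordinate `xᵢ` to `∑ⱼ M i j • xⱼ`. Applied with `M = ρ(g)⁻¹`, this realises the
action `(g·f)(w) = f(ρ(g)⁻¹ w)`. -/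
noncomputable def matrixSubst {k : Type*} [Field k] {n : ℕ}
    (M : Matrix (Fin n) (Fin n) k) :
    MvPolynomial (Fin n) k →ₐ[k] MvPolynomial (Fin n) k :=
  MvPolynomial.aeval fun i => ∑ j, MvPolynomial.C (M i j) * MvPolynomial.X j

/-!
Differentiation `D` along a fixed vector `v` commutes with the action and lowers the degree of a
homogeneous polynomial by one, while Euler's identity gives `(D f)(v) = d · f(v)` for `f`
homogeneous of degree `d`. If `d > 1` is minimal, then `D f` must vanish at `v`, so `d = 0` in `k`.
-/

section DirDeriv

variable {R σ τ : Type*} [CommSemiring R]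

/-- The directional derivative along `v`, as the derivation of the polynomial ring determined by
the coordinates of `v`. -/
noncomputable def dirDeriv (v : σ → R) : Derivation R (MvPolynomial σ R) (MvPolynomial σ R) :=
  mkDerivation R fun i => C (v i)

theorem dirDeriv_X (v : σ → R) (i : σ) : dirDeriv v (X i) = C (v i) :=
  mkDerivation_X R _ i

theorem dirDeriv_eq_sum_pderiv (v : σ → R) {f : MvPolynomial σ R} {s : Finset σ}
    (hs : f.vars ⊆ s) : dirDeriv v f = ∑ i ∈ s, C (v i) * pderiv i f := by
  classical
  let D : Derivation R (MvPolynomial σ R) (MvPolynomial σ R) :=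
    ∑ i ∈ s, (C (v i) : MvPolynomial σ R) • pderiv i
  have hD (g : MvPolynomial σ R) : D g = ∑ i ∈ s, C (v i) * pderiv i g := by
    rw [← Derivation.coeFnAddMonoidHom_apply]
    simp [D]
  rw [← hD]
  refine derivation_eq_of_forall_mem_vars fun j hj => ?_
  simp [hD, dirDeriv_X, pderiv_X, Pi.single_apply, hs hj]

theorem isHomogeneous_dirDeriv (v : σ → R) {d : ℕ} {f : MvPolynomial σ R}
    (hf : f.IsHomogeneous d) : (dirDeriv v f).IsHomogeneous (d - 1) := by
  rw [dirDeriv_eq_sum_pderiv v subset_rfl]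
  exact IsHomogeneous.sum _ _ _ fun i _ => hf.pderiv.C_mul (v i)

theorem eval_dirDeriv_self [Finite σ] (v : σ → R) {d : ℕ} {f : MvPolynomial σ R}
    (hf : f.IsHomogeneous d) : eval v (dirDeriv v f) = d * eval v f := by
  cases nonempty_fintype σ
  simpa [dirDeriv_eq_sum_pderiv v (Finset.subset_univ f.vars)] using
    congrArg (eval v) hf.sum_X_mul_pderiv

variable [Fintype σ]

theorem dirDeriv_toMvPolynomial (v : σ → R) (M : Matrix τ σ R) (i : τ) :
    dirDeriv v (M.toMvPolynomial i) = C (M.mulVec v i) := by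
  simp [Matrix.toMvPolynomial, ← C_mul_X_eq_monomial, dirDeriv_X, Matrix.mulVec, dotProduct]

theorem dirDeriv_bind₁_toMvPolynomial (v : σ → R) (M : Matrix τ σ R) (f : MvPolynomial τ R) :
    dirDeriv v (bind₁ M.toMvPolynomial f) =
      bind₁ M.toMvPolynomial (dirDeriv (M.mulVec v) f) := by
  induction f using MvPolynomial.induction_on with
  | C a => simp
  | add p q hp hq => simp only [map_add, hp, hq]
  | mul_X p i hp =>
    simp only [map_mul, Derivation.leibniz, smul_eq_mul, map_add, bind₁_X_right, bind₁_C_right,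
      hp, dirDeriv_X, dirDeriv_toMvPolynomial]

end DirDeriv

theorem matrixSubst_eq_bind₁ {k : Type*} [Field k] {n : ℕ} (M : Matrix (Fin n) (Fin n) k) :
    matrixSubst M = bind₁ M.toMvPolynomial := by
  ext1 i
  simp [matrixSubst, Matrix.toMvPolynomial, C_mul_X_eq_monomial]

theorem ringChar_prime_and_dvd_of_natCast_eq_zero {R : Type*} [NonAssocSemiring R]
    [NoZeroDivisors R] [Nontrivial R] {d : ℕ} (hd : d ≠ 0) (h : (d : R) = 0) :
    (ringChar R).Prime ∧ ringChar R ∣ d :=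
  have hdvd : ringChar R ∣ d := ringChar.dvd h
  ⟨CharP.char_prime_of_ne_zero R (ne_zero_of_dvd_ne_zero hd hdvd), hdvd⟩

theorem least_positive_invariant_degree_eq_one_or_char_dvd_general
    {R σ ι : Type*} [CommSemiring R] [NoZeroDivisors R] [Fintype σ]
    (A : ι → Matrix σ σ R) (v : σ → R) (hv : ∀ i, (A i).mulVec v = v) (d : ℕ)
    (hd : IsLeast {e : ℕ | 0 < e ∧ ∃ f : MvPolynomial σ R,
      (∀ i, bind₁ (A i).toMvPolynomial f = f) ∧ f.IsHomogeneous e ∧ eval v f ≠ 0} d) :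
    d = 1 ∨ ((ringChar R).Prime ∧ ringChar R ∣ d) := by
  obtain ⟨⟨hpos, f, hinv, hhom, hne⟩, hmin⟩ := hd
  have : Nontrivial R := nontrivial_of_ne _ _ hne
  refine or_iff_not_imp_left.2 fun hd1 =>
    ringChar_prime_and_dvd_of_natCast_eq_zero hpos.ne' ?_
  by_contra hdR
  have hinv' (i : ι) : bind₁ (A i).toMvPolynomial (dirDeriv v f) = dirDeriv v f := by
    simpa only [hv, hinv] using (dirDeriv_bind₁_toMvPolynomial v (A i) f).symm
  have hne' : eval v (dirDeriv v f) ≠ 0 := by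
    rw [eval_dirDeriv_self v hhom]
    exact mul_ne_zero hdR hne
  have hle : d ≤ d - 1 :=
    hmin ⟨by lia, dirDeriv v f, hinv', isHomogeneous_dirDeriv v hhom, hne'⟩
  lia

/-- Let `k` be a field, `G` a group, `n ≥ 1`, and `ρ : G →* GL(n,k)` a
representation of `G` on `V = kⁿ`. Let `v ∈ V` be fixed by every element of `G`, and suppose
there exists a `G`-invariant homogeneous polynomial of positive degree not vanishing at `v`.
Let `d` be the least positive degree of such a polynomial. Then either `d = 1`, or the
characteristic of `k` is a prime `p > 0` and `p` divides `d`.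
(In particular, if `char k = 0` then `d = 1`.) -/
theorem least_positive_invariant_degree_eq_one_or_char_dvd
    {k : Type*} [Field k] {G : Type*} [Group G] {n : ℕ} (hn : 1 ≤ n)
    (ρ : G →* Matrix.GeneralLinearGroup (Fin n) k)
    (v : Fin n → k)
    (hv : ∀ g : G, Matrix.mulVec (↑(ρ g) : Matrix (Fin n) (Fin n) k) v = v)
    (d : ℕ)
    (hd : IsLeast {e : ℕ | 0 < e ∧ ∃ f : MvPolynomial (Fin n) k,
      (∀ g : G, matrixSubst (↑(ρ g)⁻¹ : Matrix (Fin n) (Fin n) k) f = f) ∧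
      f.IsHomogeneous e ∧ MvPolynomial.eval v f ≠ 0} d) :
    d = 1 ∨ ((ringChar k).Prime ∧ ringChar k ∣ d) := by
  have hv' (g : G) : Matrix.mulVec (↑(ρ g)⁻¹ : Matrix (Fin n) (Fin n) k) v = v := by
    simpa only [map_inv] using hv g⁻¹
  simp only [matrixSubst_eq_bind₁] at hd
  exact least_positive_invariant_degree_eq_one_or_char_dvd_general _ v hv' d hd
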